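/- arXiv:2404.15286 — 5 statements merged into one kernel-verified Lean document; each statement's English description precedes it below -/
import Mathlib

section
/- Let n ≥ 2, let ⟨·,·⟩ be a real inner product on M_{n,n}(ℝ), define f_n(v) = v·1_n^T − 1_n·v^T, and define the inner product ⟨x, y⟩_n := (x^T 1_n)(y^T 1_n) + ⟨f_n(x), f_n(y)⟩ on ℝ^n. If e_1, …, e_{n−1} ∈ ℝ^n are orthonormal with respect to ⟨·,·⟩_n and each e_i is ⟨·,·⟩_n-orthogonal to 1_n, then the matrices B_i = f_n(e_i), i = 1, …, n−1, form an orthonormal basis, with respect to ⟨·,·⟩, of the subspace l_n of additively consistent skew-symmetric matrices. -/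
open Matrix

/-- The map `f_n : ℝⁿ → M_{n,n}(ℝ)`, `f_n v = v ⬝ 1ᵀ − 1 ⬝ vᵀ`. -/
def fMap (n : ℕ) (v : Fin n → ℝ) : Matrix (Fin n) (Fin n) ℝ :=
  Matrix.vecMulVec v 1 - Matrix.vecMulVec 1 v

/-- `l_n`: the subspace of additively consistent skew-symmetric matrices. -/
def lnSub (n : ℕ) : Submodule ℝ (Matrix (Fin n) (Fin n) ℝ) where
  carrier := {B | (∀ i j, B i j + B j i = 0) ∧ ∀ i j k, B i j + B j k + B k i = 0}
  add_mem' := by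
    rintro a b ⟨ha1, ha2⟩ ⟨hb1, hb2⟩
    refine ⟨fun i j => ?_, fun i j k => ?_⟩
    · have := ha1 i j; have := hb1 i j
      simp only [Matrix.add_apply]; linarith
    · have := ha2 i j k; have := hb2 i j k
      simp only [Matrix.add_apply]; linarith
  zero_mem' := by
    refine ⟨fun i j => ?_, fun i j k => ?_⟩ <;> simp
  smul_mem' := by
    rintro c a ⟨ha1, ha2⟩
    refine ⟨fun i j => ?_, fun i j k => ?_⟩
    · have := ha1 i j
      simp only [Matrix.smul_apply, smul_eq_mul]; linear_combination c * this
    · have := ha2 i j k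
      simp only [Matrix.smul_apply, smul_eq_mul]; linear_combination c * this

/-- if `e 1, …, e (n-1)` are orthonormal for the induced inner
product `⟨x, y⟩ₙ = (xᵀ1)(yᵀ1) + ip (f_n x) (f_n y)` and orthogonal to `1ₙ`,
then the matrices `f_n (e i)` form an `ip`-orthonormal basis of `l_n`. -/
theorem f_of_orthonormal_is_orthonormal_basis_of_ln (n : ℕ) (hn : 2 ≤ n)
    (ip : Matrix (Fin n) (Fin n) ℝ → Matrix (Fin n) (Fin n) ℝ → ℝ)
    (ip_symm : ∀ A B, ip A B = ip B A)
    (ip_add_left : ∀ A A' B, ip (A + A') B = ip A B + ip A' B)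
    (ip_smul_left : ∀ (c : ℝ) A B, ip (c • A) B = c * ip A B)
    (ip_pos : ∀ A, A ≠ 0 → 0 < ip A A)
    (e : Fin (n - 1) → Fin n → ℝ)
    (h_orthonormal : ∀ i j : Fin (n - 1),
        (e i ⬝ᵥ (1 : Fin n → ℝ)) * (e j ⬝ᵥ (1 : Fin n → ℝ)) + ip (fMap n (e i)) (fMap n (e j))
          = if i = j then 1 else 0)
    (h_orth_ones : ∀ i : Fin (n - 1),
        (e i ⬝ᵥ (1 : Fin n → ℝ)) * ((1 : Fin n → ℝ) ⬝ᵥ (1 : Fin n → ℝ))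
          + ip (fMap n (e i)) (fMap n 1) = 0) :
    (∀ i, fMap n (e i) ∈ lnSub n) ∧
    LinearIndependent ℝ (fun i => fMap n (e i)) ∧
    Submodule.span ℝ (Set.range fun i => fMap n (e i)) = lnSub n ∧
    (∀ i j : Fin (n - 1), ip (fMap n (e i)) (fMap n (e j)) = if i = j then 1 else 0) := by
  obtain ⟨m, rfl⟩ : ∃ m, n = m + 1 := ⟨n - 1, by omega⟩
  have h1 : fMap (m + 1) 1 = 0 := by simp [fMap]
  have hz : ∀ A, ip A 0 = 0 := by
    intro A
    have h := ip_smul_left 0 0 A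
    rw [zero_smul, zero_mul] at h
    rw [ip_symm, h]
  have hs : ∀ i, e i ⬝ᵥ (1 : Fin (m + 1) → ℝ) = 0 := by
    intro i
    have h := h_orth_ones i
    rw [h1, hz, add_zero] at h
    rcases mul_eq_zero.1 h with h | h
    · exact h
    · exfalso
      simp [dotProduct] at h
      have : (0 : ℝ) ≤ m := Nat.cast_nonneg m
      linarith
  have hon : ∀ i j, ip (fMap (m + 1) (e i)) (fMap (m + 1) (e j)) = if i = j then 1 else 0 := by
    intro i j
    have h := h_orthonormal i j
    rwa [hs, zero_mul, zero_add] at h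
  have hmem : ∀ i, fMap (m + 1) (e i) ∈ lnSub (m + 1) := by
    intro i
    refine ⟨fun a b => ?_, fun a b c => ?_⟩ <;> simp [fMap, Matrix.vecMulVec_apply]
  have hli : LinearIndependent ℝ (fun i => fMap (m + 1) (e i)) := by
    rw [Fintype.linearIndependent_iff]
    intro g hg j
    let L : Matrix (Fin (m + 1)) (Fin (m + 1)) ℝ →ₗ[ℝ] ℝ :=
      { toFun := fun A => ip A (fMap (m + 1) (e j))
        map_add' := fun A B => ip_add_left A B _
        map_smul' := fun c A => ip_smul_left c A _ }
    have hL : ∀ i, L (fMap (m + 1) (e i)) = if i = j then 1 else 0 := fun i => hon i j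
    have h := congrArg L hg
    simpa [map_sum, hL] using h
  refine ⟨hmem, hli, ?_, hon⟩
  apply Submodule.eq_of_le_of_finrank_le
  · rw [Submodule.span_le]
    rintro _ ⟨i, rfl⟩
    exact hmem i
  · rw [finrank_span_eq_card hli, Fintype.card_fin]
    let R : lnSub (m + 1) →ₗ[ℝ] (Fin m → ℝ) :=
      { toFun := fun B i => B.1 i.succ 0
        map_add' := fun A B => rfl
        map_smul' := fun c A => rfl }
    have hR : Function.Injective R := by
      rw [injective_iff_map_eq_zero]
      rintro ⟨B, hB1, hB2⟩ h
      have h0 : ∀ i, B i 0 = 0 := by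
        intro i
        refine Fin.cases ?_ (fun i => ?_) i
        · have := hB1 0 0
          linarith
        · exact congrFun h i
      apply Subtype.ext
      ext i j
      have a := hB2 i j 0
      have b := hB1 i 0
      have c := h0 i
      have d := h0 j
      change B i j = 0
      linarith
    have := LinearMap.finrank_le_finrank_of_injective hR
    simpa using this
end

section
/- Let n ≥ 2, let M be an n×n real skew-symmetric matrix, let U_n = 1_n·1_n^T be the all-ones matrix, and consider the Frobenius inner product ⟨A, B⟩ = tr(A·B^T) on M_{n,n}(ℝ). Then the orthogonal projection of M onto the subspace l_n of additively consistent skew-symmetric matrices is given by M* = (1/n)·[(M·U_n) − (M·U_n)^T], or equivalently M* = (1/n)·f_n(M·1_n). -/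
open Matrix

/-- for skew-symmetric `M`, the Frobenius-orthogonal projection of
`M` onto `l_n` is `(1/n) • (M·Uₙ − (M·Uₙ)ᵀ)`, which equals `(1/n) • f_n (M·1ₙ)`. -/
theorem frobenius_projection_onto_ln (n : ℕ) (hn : 2 ≤ n)
    (M : Matrix (Fin n) (Fin n) ℝ) (hskew : ∀ i j, M i j + M j i = 0) :
    ((1 / (n : ℝ)) • (M * Matrix.vecMulVec 1 1 - (M * Matrix.vecMulVec 1 1)ᵀ)) ∈ lnSub n ∧
    (∀ A ∈ lnSub n,
        ((M - (1 / (n : ℝ)) • (M * Matrix.vecMulVec 1 1 - (M * Matrix.vecMulVec 1 1)ᵀ)) *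
            (M - (1 / (n : ℝ)) • (M * Matrix.vecMulVec 1 1 - (M * Matrix.vecMulVec 1 1)ᵀ))ᵀ).trace
          ≤ ((M - A) * (M - A)ᵀ).trace) ∧
    (1 / (n : ℝ)) • (M * Matrix.vecMulVec 1 1 - (M * Matrix.vecMulVec 1 1)ᵀ)
      = (1 / (n : ℝ)) • fMap n (M *ᵥ 1) := by
  have hn0 : (n : ℝ) ≠ 0 := by
    have : n ≠ 0 := by omega
    exact_mod_cast this
  set P := (1 / (n : ℝ)) • (M * Matrix.vecMulVec 1 1 - (M * Matrix.vecMulVec 1 1)ᵀ) with hP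
  have hPa : ∀ i j, P i j = (1 / (n : ℝ)) * ((∑ k, M i k) - ∑ k, M j k) := by
    intro i j
    simp [hP, Matrix.mul_apply, Matrix.vecMulVec_apply]
  have hPm : P ∈ lnSub n := by
    refine ⟨fun i j => ?_, fun i j k => ?_⟩
    · rw [hPa, hPa]; ring
    · rw [hPa, hPa, hPa]; ring
  refine ⟨hPm, ?_, ?_⟩
  · intro A hA
    have htot : ∑ i, ∑ k, M i k = 0 := by
      have h1 : ∑ i, ∑ k, M i k = ∑ i, ∑ k, M k i := Finset.sum_comm
      have h2 : ∑ i, ∑ k, M i k + ∑ i, ∑ k, M k i = 0 := by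
        simp [← Finset.sum_add_distrib, hskew]
      linarith
    have hrow : ∀ i, ∑ j, (M i j - P i j) = 0 := by
      intro i
      simp only [hPa, Finset.sum_sub_distrib, ← Finset.mul_sum, htot]
      simp
      field_simp
      ring
    have hcol : ∀ j, ∑ i, (M i j - P i j) = 0 := by
      intro j
      rw [← neg_eq_zero, ← Finset.sum_neg_distrib, ← hrow j]
      refine Finset.sum_congr rfl fun i _ => ?_
      have := hskew i j
      have := hPm.1 i j
      linarith
    have hD := (lnSub n).sub_mem hPm hA
    have i0 : Fin n := ⟨0, by omega⟩
    have hDa : ∀ i j, P i j - A i j = (P i i0 - A i i0) - (P j i0 - A j i0) := by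
      intro i j
      have h1 := hD.2 i j i0
      have h2 := hD.1 i i0
      simp only [Matrix.sub_apply] at h1 h2
      linarith
    have hort : ∑ i, ∑ j, (M i j - P i j) * (P i j - A i j) = 0 := by
      have h1 : ∑ i, ∑ j, (M i j - P i j) * (P i i0 - A i i0) = 0 := by
        simp [← Finset.sum_mul, hrow]
      have h2 : ∑ i, ∑ j, (M i j - P i j) * (P j i0 - A j i0) = 0 := by
        rw [Finset.sum_comm]
        simp [← Finset.sum_mul, hcol]
      calc _ = ∑ i, ∑ j, ((M i j - P i j) * (P i i0 - A i i0)
              - (M i j - P i j) * (P j i0 - A j i0)) := by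
            refine Finset.sum_congr rfl fun i _ => Finset.sum_congr rfl fun j _ => ?_
            rw [hDa i j, mul_sub]
        _ = 0 := by
            simp only [Finset.sum_sub_distrib] at h1 h2 ⊢
            rw [h1, h2, sub_zero]
    have key : ∀ B : Matrix (Fin n) (Fin n) ℝ,
        ((M - B) * (M - B)ᵀ).trace = ∑ i, ∑ j, (M i j - B i j) ^ 2 := by
      intro B
      simp [Matrix.trace, Matrix.mul_apply, sq]
    rw [key, key]
    have hexp : ∑ i, ∑ j, (M i j - A i j) ^ 2 = ∑ i, ∑ j, (M i j - P i j) ^ 2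
        + 2 * ∑ i, ∑ j, (M i j - P i j) * (P i j - A i j)
        + ∑ i, ∑ j, (P i j - A i j) ^ 2 := by
      simp only [Finset.mul_sum, ← Finset.sum_add_distrib]
      refine Finset.sum_congr rfl fun i _ => Finset.sum_congr rfl fun j _ => ?_
      ring
    have hpos : 0 ≤ ∑ i, ∑ j, (P i j - A i j) ^ 2 :=
      Finset.sum_nonneg fun i _ => Finset.sum_nonneg fun j _ => sq_nonneg _
    rw [hexp, hort]
    linarith
  · ext i j
    rw [hPa]
    simp [fMap, Matrix.vecMulVec_apply, Matrix.mulVec, dotProduct]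
end

section
/- Let n ≥ 2, let W be a symmetric positive definite n×n real matrix, define f_n(v) = v·1_n^T − 1_n·v^T and ⟨A, B⟩_W = tr(A·W·B^T). If v, w ∈ ℝ^n satisfy v^T 1_n = 0 and w^T 1_n = 0, then ⟨f_n(v), f_n(w)⟩_W = v^T·[(1_n^T W 1_n)·I_n + n·W]·w. -/
open Matrix

lemma trace_aux (n : ℕ) (W : Matrix (Fin n) (Fin n) ℝ) (a b c d : Fin n → ℝ) :
    (Matrix.vecMulVec a b * W * Matrix.vecMulVec c d).trace = (b ⬝ᵥ (W *ᵥ c)) * (a ⬝ᵥ d) := by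
  rw [Matrix.mul_assoc, Matrix.mul_vecMulVec, Matrix.vecMulVec_mul_vecMulVec,
    Matrix.trace_vecMulVec]
  simp

/-- if `vᵀ1 = 0` and `wᵀ1 = 0`, then
`⟨f_n v, f_n w⟩_W = vᵀ·[(1ᵀW1)·Iₙ + n·W]·w`. -/
theorem inner_W_f_f_of_orth_ones (n : ℕ) (hn : 2 ≤ n)
    (W : Matrix (Fin n) (Fin n) ℝ) (hWsymm : W.IsSymm) (hW : W.PosDef)
    (v w : Fin n → ℝ) (hv : v ⬝ᵥ (1 : Fin n → ℝ) = 0) (hw : w ⬝ᵥ (1 : Fin n → ℝ) = 0) :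
    (fMap n v * W * (fMap n w)ᵀ).trace
      = v ⬝ᵥ ((((1 : Fin n → ℝ) ⬝ᵥ (W *ᵥ (1 : Fin n → ℝ))) • (1 : Matrix (Fin n) (Fin n) ℝ)
          + (n : ℝ) • W) *ᵥ w) := by
  have hw' : (1 : Fin n → ℝ) ⬝ᵥ w = 0 := by rw [dotProduct_comm]; exact hw
  have h1 : (1 : Fin n → ℝ) ⬝ᵥ (1 : Fin n → ℝ) = n := by simp
  simp only [fMap, Matrix.transpose_sub, Matrix.transpose_vecMulVec, Matrix.sub_mul,
    Matrix.mul_sub, Matrix.trace_sub, trace_aux, hv, hw', h1, Matrix.add_mulVec,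
    Matrix.smul_mulVec, Matrix.one_mulVec, dotProduct_add, dotProduct_smul, smul_eq_mul]
  ring
end

section
/- Let n ≥ 2, let W be a symmetric positive definite n×n real matrix, define f_n(v) = v·1_n^T − 1_n·v^T, ⟨A, B⟩_W = tr(A·W·B^T), and M = (1_n^T W 1_n)·I_n + n·W. Let y_1, …, y_{n−1} ∈ ℝ^n be nonzero vectors each satisfying y_i^T 1_n = 0, and suppose y_i^T M y_j = 0 for all i ≠ j. Then the matrices f_n(y_1), …, f_n(y_{n−1}) form a basis of the subspace l_n of additively consistent skew-symmetric matrices, which is pairwise orthogonal with respect to ⟨·,·⟩_W. -/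
open Matrix

theorem fMap_apply' (n : ℕ) (v : Fin n → ℝ) (i j : Fin n) : fMap n v i j = v i - v j := by
  simp [fMap, vecMulVec_apply]

theorem fMap_mem (n : ℕ) (v : Fin n → ℝ) : fMap n v ∈ lnSub n := by
  refine ⟨fun i j => ?_, fun i j k => ?_⟩ <;> simp only [fMap_apply'] <;> ring

theorem fMap_trace (n : ℕ) (W : Matrix (Fin n) (Fin n) ℝ) (u v : Fin n → ℝ)
    (hu : u ⬝ᵥ (1 : Fin n → ℝ) = 0) (hv : v ⬝ᵥ (1 : Fin n → ℝ) = 0) :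
    (fMap n u * W * (fMap n v)ᵀ).trace =
      u ⬝ᵥ ((((1 : Fin n → ℝ) ⬝ᵥ (W *ᵥ (1 : Fin n → ℝ))) • (1 : Matrix (Fin n) (Fin n) ℝ)
            + (n : ℝ) • W) *ᵥ v) := by
  have h1 : (1 : Fin n → ℝ) ⬝ᵥ v = 0 := by rw [dotProduct_comm]; exact hv
  have key : ∀ a b c d : Fin n → ℝ,
      (vecMulVec a b * W * vecMulVec c d).trace = (b ⬝ᵥ (W *ᵥ c)) * (a ⬝ᵥ d) := by
    intro a b c d
    rw [vecMulVec_mul, vecMulVec_mul_vecMulVec, trace_vecMulVec, ← dotProduct_mulVec,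
      dotProduct_smul, smul_eq_mul]
  have h2 : (1 : Fin n → ℝ) ⬝ᵥ 1 = n := by simp [dotProduct]
  simp only [fMap, transpose_sub, transpose_vecMulVec, sub_mul, mul_sub, trace_sub, key, hu, h1, h2,
    add_mulVec, smul_mulVec, one_mulVec, dotProduct_add, dotProduct_smul, smul_eq_mul]
  ring

theorem finrank_lnSub_le (m : ℕ) : Module.finrank ℝ (lnSub (m+1)) ≤ m := by
  let g : lnSub (m+1) →ₗ[ℝ] (Fin m → ℝ) :=
    { toFun := fun B i => B.1 i.succ 0
      map_add' := by intro a b; ext i; simp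
      map_smul' := by intro a b; ext i; simp }
  have hg : Function.Injective g := by
    rw [← LinearMap.ker_eq_bot, LinearMap.ker_eq_bot']
    rintro ⟨B, h1, h2⟩ hB
    have h0 : ∀ i, B i 0 = 0 := by
      intro i
      refine Fin.cases ?_ (fun i => ?_) i
      · have := h1 0 0; linarith
      · exact congrFun hB i
    ext i j
    have a1 := h2 i j 0
    have a2 := h1 0 i
    have a3 := h0 i
    have a4 := h0 j
    simp only [ZeroMemClass.coe_zero, Matrix.zero_apply]
    linarith
  simpa using LinearMap.finrank_le_finrank_of_injective hg

/-- if `y 1, …, y (n-1)` are nonzero, orthogonal to `1ₙ`, and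
`yᵢᵀ M yⱼ = 0` for `i ≠ j` where `M = (1ᵀW1)·Iₙ + n·W`, then
`f_n (y 1), …, f_n (y (n-1))` is a `W`-orthogonal basis of `l_n`. -/
theorem W_orthogonal_basis_of_ln (n : ℕ) (hn : 2 ≤ n)
    (W : Matrix (Fin n) (Fin n) ℝ) (hWsymm : W.IsSymm) (hW : W.PosDef)
    (y : Fin (n - 1) → Fin n → ℝ)
    (hy_ne : ∀ i, y i ≠ 0)
    (hy_orth_ones : ∀ i, y i ⬝ᵥ (1 : Fin n → ℝ) = 0)
    (hyM : ∀ i j, i ≠ j →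
        y i ⬝ᵥ ((((1 : Fin n → ℝ) ⬝ᵥ (W *ᵥ (1 : Fin n → ℝ))) • (1 : Matrix (Fin n) (Fin n) ℝ)
            + (n : ℝ) • W) *ᵥ y j) = 0) :
    (∀ i, fMap n (y i) ∈ lnSub n) ∧
    LinearIndependent ℝ (fun i => fMap n (y i)) ∧
    Submodule.span ℝ (Set.range fun i => fMap n (y i)) = lnSub n ∧
    (∀ i j, i ≠ j → (fMap n (y i) * W * (fMap n (y j))ᵀ).trace = 0) := by
  obtain ⟨m, rfl⟩ : ∃ m, n = m + 1 := ⟨n - 1, by omega⟩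
  set M := (((1 : Fin (m+1) → ℝ) ⬝ᵥ (W *ᵥ (1 : Fin (m+1) → ℝ))) •
    (1 : Matrix (Fin (m+1)) (Fin (m+1)) ℝ) + ((m+1 : ℕ) : ℝ) • W) with hM
  have hpos : ∀ v : Fin (m+1) → ℝ, v ≠ 0 → 0 < v ⬝ᵥ (M *ᵥ v) := by
    intro v hv
    have a1 : 0 < v ⬝ᵥ (W *ᵥ v) := by simpa using hW.dotProduct_mulVec_pos hv
    have a2 : 0 < (1 : Fin (m+1) → ℝ) ⬝ᵥ (W *ᵥ 1) := by
      simpa using hW.dotProduct_mulVec_pos (x := (1 : Fin (m+1) → ℝ)) one_ne_zero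
    have a3 : 0 ≤ v ⬝ᵥ v := by simpa using dotProduct_star_self_nonneg v
    simp only [hM, add_mulVec, smul_mulVec, one_mulVec, dotProduct_add, dotProduct_smul,
      smul_eq_mul]
    have a4 : (0 : ℝ) < ((m+1 : ℕ) : ℝ) := by positivity
    have := mul_pos a4 a1
    have := mul_nonneg a2.le a3
    linarith
  have hmem : ∀ i, fMap (m+1) (y i) ∈ lnSub (m+1) := fun i => fMap_mem _ _
  have hli : LinearIndependent ℝ (fun i => fMap (m+1) (y i)) := by
    rw [Fintype.linearIndependent_iff]
    intro c hc j
    have hs : ∑ i, c i • y i = 0 := by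
      have hd : ∀ a b, (∑ i, c i • y i) a = (∑ i, c i • y i) b := by
        intro a b
        have := congrFun (congrFun hc a) b
        simp only [Matrix.sum_apply, Matrix.smul_apply, fMap_apply', smul_eq_mul, mul_sub,
          Finset.sum_sub_distrib, Matrix.zero_apply] at this
        simp only [Finset.sum_apply, Pi.smul_apply, smul_eq_mul]
        linarith
      have h1 : (∑ i, c i • y i) ⬝ᵥ (1 : Fin (m+1) → ℝ) = 0 := by
        simp [sum_dotProduct, smul_dotProduct, hy_orth_ones]
      generalize (∑ i, c i • y i) = s at hd h1
      ext a
      have : s ⬝ᵥ (1 : Fin (m+1) → ℝ) = (m+1 : ℝ) * s a := by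
        simp [dotProduct, fun b => hd b a]
      rw [h1] at this
      have h3 : (m+1 : ℝ) ≠ 0 := by positivity
      simpa [h3] using this.symm
    have h2 : y j ⬝ᵥ (M *ᵥ (∑ i, c i • y i)) = c j * (y j ⬝ᵥ (M *ᵥ y j)) := by
      rw [mulVec_sum, dotProduct_sum, Finset.sum_eq_single j]
      · rw [mulVec_smul, dotProduct_smul, smul_eq_mul]
      · intro i _ hij
        rw [mulVec_smul, dotProduct_smul, hyM j i hij.symm, smul_zero]
      · simp
    rw [hs, mulVec_zero, dotProduct_zero] at h2
    exact (mul_eq_zero.mp h2.symm).resolve_right (hpos _ (hy_ne j)).ne'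
  refine ⟨hmem, hli, ?_, ?_⟩
  · apply Submodule.eq_of_le_of_finrank_le
    · rw [Submodule.span_le]
      rintro _ ⟨i, rfl⟩
      exact hmem i
    · rw [finrank_span_eq_card hli]
      simpa using finrank_lnSub_le m
  · intro i j hij
    rw [fMap_trace _ _ _ _ (hy_orth_ones i) (hy_orth_ones j)]
    exact hyM i j hij
end

section
/- Let n ≥ 2 and let B be an n×n real skew-symmetric matrix. Then B satisfies ⟨B, f_n(v)⟩ = tr(B·f_n(v)^T) = 0 for every v ∈ ℝ^n (i.e., B lies in the Frobenius-orthogonal complement h_n of l_n within the space of skew-symmetric matrices) if and only if B·1_n = 0. -/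
open Matrix

theorem trace_fMap_aux (n : ℕ) (B : Matrix (Fin n) (Fin n) ℝ)
    (hskew : ∀ i j, B i j + B j i = 0) (v : Fin n → ℝ) :
    (B * (fMap n v)ᵀ).trace = 2 * (v ⬝ᵥ (B *ᵥ (1 : Fin n → ℝ))) := by
  have h1 : (B * (fMap n v)ᵀ).trace = ∑ i, ∑ j, B i j * v i - ∑ i, ∑ j, B i j * v j := by
    simp [Matrix.trace, Matrix.mul_apply, fMap, Matrix.vecMulVec_apply, mul_sub,
      Finset.sum_sub_distrib]
  have h2 : ∑ i, ∑ j, B i j * v j = - ∑ i, ∑ j, B i j * v i := by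
    rw [Finset.sum_comm, ← Finset.sum_neg_distrib]
    refine Finset.sum_congr rfl fun i _ => ?_
    rw [← Finset.sum_neg_distrib]
    refine Finset.sum_congr rfl fun j _ => ?_
    linear_combination v i * hskew i j
  have h3 : v ⬝ᵥ (B *ᵥ (1 : Fin n → ℝ)) = ∑ i, ∑ j, B i j * v i := by
    simp [dotProduct, Matrix.mulVec, Finset.mul_sum, mul_comm]
  rw [h1, h2, h3]
  ring

/-- a skew-symmetric `B` is Frobenius-orthogonal to every element
of `l_n = range f_n` (i.e. `B ∈ h_n`) iff `B · 1ₙ = 0`. -/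
theorem mem_hn_iff_mulVec_ones_eq_zero (n : ℕ) (hn : 2 ≤ n)
    (B : Matrix (Fin n) (Fin n) ℝ) (hskew : ∀ i j, B i j + B j i = 0) :
    (∀ v : Fin n → ℝ, (B * (fMap n v)ᵀ).trace = 0) ↔ B *ᵥ (1 : Fin n → ℝ) = 0 := by
  constructor
  · intro h
    have h0 := h (B *ᵥ (1 : Fin n → ℝ))
    rw [trace_fMap_aux n B hskew] at h0
    exact dotProduct_self_eq_zero.mp (by linarith)
  · intro h v
    rw [trace_fMap_aux n B hskew, h]
    simp
end
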